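/- arXiv:2511.04261 — 3 statements merged into one kernel-verified Lean document; each statement's English description precedes it below -/
import Mathlib

section
/- Let k ∈ ℕ, ε > 0, let σ : Fin k → ℝ be positive scales, and let x, y : Fin k → ℝ satisfy ∑_{i} |x i − y i| / σ i ≤ ε. Let λ be the product over i ∈ Fin k of the Laplace measures with scale σ i on ℝ, and let μ_x and μ_y be the pushforwards of λ under the translations η ↦ x + η and η ↦ y + η. Then for every measurable set S ⊆ (Fin k → ℝ), μ_x(S) ≤ exp(ε) · μ_y(S). That is, adding independent Laplace noise with possibly different scales σ i to the coordinates of a statistic satisfies ε-differential privacy whenever the σ-weighted L1 distance between the statistics of neighboring inputs is at most ε. -/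
/-!
In one dimension, translating the Laplace measure of scale `s` by `a` gives the density
`t ↦ (1 / (2s)) exp (-|t - a| / s)`, and by the triangle inequality the densities for the
translations by `a` and by `b` differ by a factor of at most `exp (|a - b| / s)`
(`map_laplaceMeasure_le`). Translated product measures are products of the translated factors, so
multiplying over the coordinates gives the factor `exp (∑ i, |x i - y i| / σ i) ≤ exp ε` on boxes.
The outer measure defining `Measure.pi` is the largest one whose value on every box is at most the
product of the measures of its sides, which carries the bound from boxes to all measurable sets.
-/

open MeasureTheory

/-- The Laplace measure with scale `σ` on `ℝ`. -/
noncomputable def laplaceMeasure (σ : ℝ) : Measure ℝ :=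
  volume.withDensity (fun t => ENNReal.ofReal ((1 / (2 * σ)) * Real.exp (-|t| / σ)))

/-- The density of a translate of the Laplace measure. -/
lemma map_laplaceMeasure (s a : ℝ) :
    (laplaceMeasure s).map (fun t => a + t) =
      volume.withDensity
        (fun t => ENNReal.ofReal ((1 / (2 * s)) * Real.exp (-|t - a| / s))) := by
  ext A hA
  have hm : Measurable (fun t : ℝ => a + t) := by fun_prop
  rw [Measure.map_apply hm hA, laplaceMeasure, withDensity_apply _ (hm hA),
    withDensity_apply _ hA, ← (measurePreserving_add_left volume a).setLIntegral_comp_preimage hA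
      (by fun_prop)]
  simp

instance map_laplaceMeasure_sigmaFinite (s a : ℝ) :
    SigmaFinite ((laplaceMeasure s).map (fun t => a + t)) := by
  rw [map_laplaceMeasure]
  exact SigmaFinite.withDensity_ofReal _

lemma map_laplaceMeasure_le {s : ℝ} (hs : 0 < s) (a b : ℝ) :
    (laplaceMeasure s).map (fun t => a + t) ≤
      ENNReal.ofReal (Real.exp (|a - b| / s)) • (laplaceMeasure s).map (fun t => b + t) := by
  rw [map_laplaceMeasure, map_laplaceMeasure, ← withDensity_smul _ (by fun_prop)]
  refine withDensity_mono (Filter.Eventually.of_forall fun t => ?_)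
  simp only [Pi.smul_apply, smul_eq_mul]
  rw [← ENNReal.ofReal_mul (Real.exp_pos _).le, mul_left_comm, ← Real.exp_add, ← add_div]
  gcongr
  have h := abs_sub_le t a b
  linarith

lemma map_pi_laplaceMeasure {k : ℕ} (σ x : Fin k → ℝ) :
    (Measure.pi fun i => laplaceMeasure (σ i)).map (fun η => x + η) =
      Measure.pi fun i => (laplaceMeasure (σ i)).map (fun t => x i + t) :=
  Measure.pi_map_pi (f := fun i t => x i + t) (fun i => by fun_prop)

/-- A domination of product measures on boxes extends to all measurable sets. -/
lemma smul_pi_le_pi {k : ℕ} {μ ν : Fin k → Measure ℝ} [∀ i, SigmaFinite (μ i)] (c : ENNReal)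
    (h : ∀ A : Fin k → Set ℝ, c * ∏ i, μ i (A i) ≤ ∏ i, ν i (A i))
    {S : Set (Fin k → ℝ)} (hS : MeasurableSet S) :
    c * Measure.pi μ S ≤ Measure.pi ν S := by
  have key : c • (Measure.pi μ).toOuterMeasure ≤
      OuterMeasure.pi fun i => (ν i).toOuterMeasure := by
    rw [OuterMeasure.le_pi]
    intro A _
    simpa [Measure.pi_pi] using h A
  rw [Measure.pi_def ν, toMeasure_apply _ _ hS]
  exact key S

/-- Heterogeneous-scale Laplace mechanism: with positive scales `σ i` and
`∑ i, |x i − y i| / σ i ≤ ε`, the pushforwards of the product of the Laplace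
measures with scales `σ i` under the translations `η ↦ x + η` and `η ↦ y + η`
satisfy `μ_x(S) ≤ exp(ε) · μ_y(S)` for every measurable set `S`. -/
theorem stmt_3 (k : ℕ) (ε : ℝ) (hε : 0 < ε) (σ : Fin k → ℝ) (hσ : ∀ i, 0 < σ i)
    (x y : Fin k → ℝ) (hxy : ∑ i, |x i - y i| / σ i ≤ ε)
    (S : Set (Fin k → ℝ)) (hS : MeasurableSet S) :
    (Measure.pi fun i => laplaceMeasure (σ i)).map (fun η => x + η) S ≤
      ENNReal.ofReal (Real.exp ε) *
        (Measure.pi fun i => laplaceMeasure (σ i)).map (fun η => y + η) S := by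
  rw [map_pi_laplaceMeasure, map_pi_laplaceMeasure]
  have h0 : ENNReal.ofReal (Real.exp ε) ≠ 0 := by simp [Real.exp_pos]
  have htop : ENNReal.ofReal (Real.exp ε) ≠ ⊤ := ENNReal.ofReal_ne_top
  rw [← ENNReal.inv_mul_le_iff h0 htop]
  refine smul_pi_le_pi _ (fun A => ?_) hS
  rw [ENNReal.inv_mul_le_iff h0 htop]
  calc ∏ i, (laplaceMeasure (σ i)).map (fun t => x i + t) (A i)
      ≤ ∏ i, ENNReal.ofReal (Real.exp (|x i - y i| / σ i)) *
          (laplaceMeasure (σ i)).map (fun t => y i + t) (A i) :=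
        Finset.prod_le_prod' fun i _ => map_laplaceMeasure_le (hσ i) (x i) (y i) (A i)
    _ = ENNReal.ofReal (Real.exp (∑ i, |x i - y i| / σ i)) *
          ∏ i, (laplaceMeasure (σ i)).map (fun t => y i + t) (A i) := by
        rw [Finset.prod_mul_distrib, Real.exp_sum,
          ENNReal.ofReal_prod_of_nonneg fun i _ => (Real.exp_pos _).le]
    _ ≤ _ := by gcongr
end

section
/- (Theorem 2: differentially private pixelization) Let M = G_R·b, N = G_C·b, m ≥ 1, ε > 0, and set σ = 255·m/(b²·ε). For an image I : Fin M × Fin N → ℝ with values in [0,255], let μ(I) ∈ (Fin G_R × Fin G_C) → ℝ be its vector of grid means, let λ_σ be the product over all grid indices of the Laplace measure with scale σ, and let μ_I be the pushforward of λ_σ under η ↦ μ(I) + η. Then for any two images I₁, I₂ with values in [0,255] differing at at most m positions and for every measurable set S ⊆ ((Fin G_R × Fin G_C) → ℝ), μ_{I₁}(S) ≤ exp(ε) · μ_{I₂}(S); i.e., the mechanism that adds independent Laplace(255·m/(b²·ε)) noise to every grid mean satisfies ε-differential privacy with respect to the m-neighboring relation on images. -/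
/-!
The vector of grid means has `ℓ¹`-sensitivity at most `255·m/b²`: the grids are pairwise disjoint,
so the total change of the means is at most `b⁻²` times the `ℓ¹`-distance of the images, and each
of the at most `m` altered pixels contributes at most `255` (`sum_abs_gridMean_sub_le`).

On the line, translating the Laplace density by `a₁` instead of `a₂` changes it pointwise by a
factor of at most `exp (|a₁ - a₂| / σ)`, by the triangle inequality (`laplaceMeasure_map_le`).
Factorwise domination `μ i ≤ c i • ν i` multiplies up to product measures (`pi_le_prod_smul_pi`),
so the two output distributions are comparable with the constant
`∏ exp (|a₁ i - a₂ i| / σ) = exp (‖a₁ - a₂‖₁ / σ) ≤ exp ε`.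
-/

open MeasureTheory

/-- The `b×b` grid with index `(r,c)`. -/
def grid (G_R G_C b : ℕ) (rc : Fin G_R × Fin G_C) :
    Finset (Fin (G_R * b) × Fin (G_C * b)) :=
  Finset.univ.filter (fun p =>
    rc.1.val * b ≤ p.1.val ∧ p.1.val < (rc.1.val + 1) * b ∧
    rc.2.val * b ≤ p.2.val ∧ p.2.val < (rc.2.val + 1) * b)

/-- The grid mean `μ_{r,c}(I) = (1/b²) · ∑_{(i,j) ∈ G_{r,c}} I(i,j)`. -/
noncomputable def gridMean (G_R G_C b : ℕ) (I : Fin (G_R * b) × Fin (G_C * b) → ℝ)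
    (rc : Fin G_R × Fin G_C) : ℝ :=
  (1 / (b : ℝ) ^ 2) * ∑ p ∈ grid G_R G_C b rc, I p

instance laplaceMeasure_sigmaFinite (σ : ℝ) : SigmaFinite (laplaceMeasure σ) := by
  unfold laplaceMeasure
  exact SigmaFinite.withDensity_ofReal _

instance laplaceMeasure_map_sigmaFinite (σ a : ℝ) :
    SigmaFinite ((laplaceMeasure σ).map (fun t => a + t)) :=
  (MeasurableEquiv.addLeft a).sigmaFinite_map

lemma laplaceMeasure_map_apply (σ a : ℝ) {s : Set ℝ} (hs : MeasurableSet s) :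
    (laplaceMeasure σ).map (fun t => a + t) s =
      ∫⁻ u in s, ENNReal.ofReal ((1 / (2 * σ)) * Real.exp (-|u - a| / σ)) := by
  have hpre : MeasurableSet ((fun t : ℝ => a + t) ⁻¹' s) := hs.preimage (by fun_prop)
  rw [Measure.map_apply (by fun_prop) hs, laplaceMeasure, withDensity_apply _ hpre,
    ← lintegral_indicator hpre, ← lintegral_indicator hs,
    ← lintegral_add_left_eq_self (μ := (volume : Measure ℝ)) (s.indicator _) a]
  refine lintegral_congr fun t => ?_
  by_cases h : a + t ∈ s
  · rw [Set.indicator_of_mem h, Set.indicator_of_mem (by exact h), add_sub_cancel_left]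
  · rw [Set.indicator_of_notMem h, Set.indicator_of_notMem (by exact h)]

/-- One-dimensional Laplace mechanism: translates of the Laplace measure dominate each other. -/
lemma laplaceMeasure_map_le {σ : ℝ} (hσ : 0 < σ) (a₁ a₂ : ℝ) :
    (laplaceMeasure σ).map (fun t => a₁ + t) ≤
      ENNReal.ofReal (Real.exp (|a₁ - a₂| / σ)) •
        (laplaceMeasure σ).map (fun t => a₂ + t) := by
  refine Measure.le_iff.2 fun s hs => ?_
  rw [Measure.smul_apply, laplaceMeasure_map_apply σ a₁ hs, laplaceMeasure_map_apply σ a₂ hs,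
    smul_eq_mul, ← lintegral_const_mul' _ _ ENNReal.ofReal_ne_top]
  refine lintegral_mono fun u => ?_
  rw [← ENNReal.ofReal_mul (Real.exp_pos _).le]
  refine ENNReal.ofReal_le_ofReal ?_
  rw [mul_left_comm, ← Real.exp_add, ← add_div]
  have h : |u - a₂| ≤ |u - a₁| + |a₁ - a₂| := abs_sub_le u a₁ a₂
  gcongr
  linarith

/-- Factorwise domination passes to finite product measures, with the product of the constants. -/
lemma pi_le_prod_smul_pi {ι : Type*} [Fintype ι] {α : ι → Type*} [∀ i, MeasurableSpace (α i)]
    (μ ν : ∀ i, Measure (α i)) [∀ i, SigmaFinite (μ i)] (c : ι → ENNReal)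
    (hc0 : ∀ i, c i ≠ 0) (hct : ∀ i, c i ≠ ⊤) (h : ∀ i, μ i ≤ c i • ν i) :
    Measure.pi μ ≤ (∏ i, c i) • Measure.pi ν := by
  have hC0 : ∏ i, c i ≠ 0 := Finset.prod_ne_zero_iff.2 fun i _ => hc0 i
  have hCt : ∏ i, c i ≠ ⊤ := ENNReal.prod_ne_top fun i _ => hct i
  -- `OuterMeasure.pi` is the largest outer measure bounded by the product on boxes, so after
  -- moving the constant to the left it suffices to compare on boxes.
  have key : (∏ i, c i)⁻¹ • (Measure.pi μ).toOuterMeasure ≤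
      OuterMeasure.pi fun i => (ν i).toOuterMeasure := by
    refine OuterMeasure.le_pi.2 fun s _ => ?_
    simp only [smul_apply, smul_eq_mul, Measure.coe_toOuterMeasure]
    rw [Measure.pi_pi, ENNReal.inv_mul_le_iff hC0 hCt, ← Finset.prod_mul_distrib]
    exact Finset.prod_le_prod' fun i _ => h i (s i)
  refine Measure.le_iff.2 fun s hs => ?_
  rw [Measure.smul_apply, smul_eq_mul, ← ENNReal.inv_mul_le_iff hC0 hCt]
  refine (key s).trans ?_
  rw [Measure.pi_def ν]
  exact le_toMeasure_apply _ _ _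

lemma grid_pairwiseDisjoint (G_R G_C b : ℕ) :
    (Set.univ : Set (Fin G_R × Fin G_C)).PairwiseDisjoint (grid G_R G_C b) := by
  -- A pixel `p` of the grid `(r, c)` determines `r = p.1 / b` and `c = p.2 / b`.
  rintro x - y - hxy
  refine Finset.disjoint_left.2 fun p hx hy => hxy ?_
  simp only [grid, Finset.mem_filter, Finset.mem_univ, true_and] at hx hy
  obtain ⟨h1, h2, h3, h4⟩ := hx
  obtain ⟨k1, k2, k3, k4⟩ := hy
  refine Prod.ext (Fin.ext ?_) (Fin.ext ?_)
  · rw [← Nat.div_eq_of_lt_le h1 h2, ← Nat.div_eq_of_lt_le k1 k2]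
  · rw [← Nat.div_eq_of_lt_le h3 h4, ← Nat.div_eq_of_lt_le k3 k4]

/-- The `ℓ¹`-sensitivity of the grid means with respect to `m`-neighboring images. -/
lemma sum_abs_gridMean_sub_le (G_R G_C b m : ℕ)
    (I₁ I₂ : Fin (G_R * b) × Fin (G_C * b) → ℝ)
    (hI₁ : ∀ q, I₁ q ∈ Set.Icc (0 : ℝ) 255) (hI₂ : ∀ q, I₂ q ∈ Set.Icc (0 : ℝ) 255)
    (hdiff : {q | I₁ q ≠ I₂ q}.ncard ≤ m) :
    ∑ rc, |gridMean G_R G_C b I₁ rc - gridMean G_R G_C b I₂ rc| ≤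
      (1 / (b : ℝ) ^ 2) * (255 * m) := by
  classical
  have hpix : ∑ p, |I₁ p - I₂ p| ≤ 255 * m := by
    have hle : ∀ p, |I₁ p - I₂ p| ≤ if I₁ p ≠ I₂ p then (255 : ℝ) else 0 := by
      intro p
      split_ifs with hp
      · have h1 := hI₁ p
        have h2 := hI₂ p
        rw [abs_le]
        constructor <;> linarith [h1.1, h1.2, h2.1, h2.2]
      · simp [not_not.1 hp]
    have hcard : ((Finset.univ.filter fun p => I₁ p ≠ I₂ p).card : ℝ) ≤ m := by
      rw [← Set.ncard_coe_finset]
      simpa using hdiff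
    calc ∑ p, |I₁ p - I₂ p| ≤ ∑ p, if I₁ p ≠ I₂ p then (255 : ℝ) else 0 :=
          Finset.sum_le_sum fun p _ => hle p
      _ = 255 * (Finset.univ.filter fun p => I₁ p ≠ I₂ p).card := by
          rw [← Finset.sum_filter, Finset.sum_const, nsmul_eq_mul, mul_comm]
      _ ≤ 255 * m := by gcongr
  calc ∑ rc, |gridMean G_R G_C b I₁ rc - gridMean G_R G_C b I₂ rc|
      ≤ ∑ rc, (1 / (b : ℝ) ^ 2) * ∑ p ∈ grid G_R G_C b rc, |I₁ p - I₂ p| := by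
        refine Finset.sum_le_sum fun rc _ => ?_
        rw [gridMean, gridMean, ← mul_sub, ← Finset.sum_sub_distrib, abs_mul,
          abs_of_nonneg (by positivity : (0 : ℝ) ≤ 1 / (b : ℝ) ^ 2)]
        gcongr
        exact Finset.abs_sum_le_sum_abs _ _
    _ = (1 / (b : ℝ) ^ 2) *
          ∑ p ∈ Finset.univ.biUnion (grid G_R G_C b), |I₁ p - I₂ p| := by
        rw [Finset.sum_biUnion (by simpa using grid_pairwiseDisjoint G_R G_C b), Finset.mul_sum]
    _ ≤ (1 / (b : ℝ) ^ 2) * (255 * m) := by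
        gcongr
        refine le_trans ?_ hpix
        exact Finset.sum_le_univ_sum_of_nonneg fun p => abs_nonneg _

/-- Differentially private pixelization: with `σ = 255·m/(b²·ε)`, adding
independent Laplace(σ) noise to every grid mean satisfies `ε`-differential privacy
with respect to the `m`-neighboring relation on images with values in `[0,255]`. -/
theorem stmt_11 (G_R G_C b m : ℕ) (hb : 0 < b) (hm : 1 ≤ m) (ε : ℝ) (hε : 0 < ε)
    (σ : ℝ) (hσ : σ = 255 * m / ((b : ℝ) ^ 2 * ε))
    (I₁ I₂ : Fin (G_R * b) × Fin (G_C * b) → ℝ)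
    (hI₁ : ∀ q, I₁ q ∈ Set.Icc (0 : ℝ) 255) (hI₂ : ∀ q, I₂ q ∈ Set.Icc (0 : ℝ) 255)
    (hdiff : {q | I₁ q ≠ I₂ q}.ncard ≤ m)
    (S : Set ((Fin G_R × Fin G_C) → ℝ)) (hS : MeasurableSet S) :
    (Measure.pi fun _ : Fin G_R × Fin G_C => laplaceMeasure σ).map
        (fun η => (fun rc => gridMean G_R G_C b I₁ rc) + η) S ≤
      ENNReal.ofReal (Real.exp ε) *
        (Measure.pi fun _ : Fin G_R × Fin G_C => laplaceMeasure σ).map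
          (fun η => (fun rc => gridMean G_R G_C b I₂ rc) + η) S := by
  have hbpos : (0 : ℝ) < b := by exact_mod_cast hb
  have hmpos : (0 : ℝ) < m := by exact_mod_cast hm
  have hσpos : 0 < σ := by rw [hσ]; positivity
  have hmap : ∀ a : Fin G_R × Fin G_C → ℝ,
      (Measure.pi fun _ : Fin G_R × Fin G_C => laplaceMeasure σ).map (fun η => a + η) =
        Measure.pi fun rc => (laplaceMeasure σ).map (fun t => a rc + t) := by
    intro a
    exact (Measure.pi_map_pi (f := fun rc t => a rc + t) fun rc => by fun_prop)
  rw [hmap, hmap]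
  have hle := pi_le_prod_smul_pi _ _ _
    (fun rc => (ENNReal.ofReal_pos.2 (Real.exp_pos _)).ne') (fun rc => ENNReal.ofReal_ne_top)
    (fun rc : Fin G_R × Fin G_C => laplaceMeasure_map_le hσpos
      (gridMean G_R G_C b I₁ rc) (gridMean G_R G_C b I₂ rc)) S
  refine hle.trans ?_
  rw [Measure.smul_apply, smul_eq_mul]
  gcongr
  rw [← ENNReal.ofReal_prod_of_nonneg fun _ _ => (Real.exp_pos _).le, ← Real.exp_sum,
    ← Finset.sum_div]
  refine ENNReal.ofReal_le_ofReal (Real.exp_le_exp.2 ?_)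
  rw [div_le_iff₀ hσpos]
  refine (sum_abs_gridMean_sub_le G_R G_C b m I₁ I₂ hI₁ hI₂ hdiff).trans_eq ?_
  rw [hσ]
  field_simp
end

section
/- (Theorem 4: privacy of the parallel per-grid mechanism via parallel composition) Let M = G_R·b, N = G_C·b, m ≥ 1, ε > 0, and σ = 255·m/(b²·ε). Suppose I₁, I₂ : Fin M × Fin N → ℝ are images with values in [0,255] that differ at at most m positions, all of which lie inside a single grid G_{r₀,c₀}. For each image I let μ_I be the product, over grid indices (r,c), of the pushforward of the Laplace measure with scale σ under η ↦ μ_{r,c}(I) + η (i.e., independent per-grid noising). Then μ_{I₁} and μ_{I₂} agree in every factor except the one indexed by (r₀,c₀), the means at (r₀,c₀) satisfy |μ_{r₀,c₀}(I₁) − μ_{r₀,c₀}(I₂)| ≤ 255·m/b², and consequently μ_{I₁}(S) ≤ exp(ε) · μ_{I₂}(S) for every measurable set S of the product output space. -/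
/-!
Since the grids are disjoint, images differing only inside `G_{r₀,c₀}` have the same mean on every
other grid, so only one factor of the product changes; there the mean moves by at most
`255·m/b² = σ·ε`, being an average of `b²` terms of which at most `m` change, each by at most `255`.

Translating the Laplace density by `a₁` rather than `a₂` changes it pointwise by a factor at most
`exp (|a₁ - a₂| / σ) ≤ exp ε`, by the triangle inequality
(`map_laplaceMeasure_le`). Parallel composition (`pi_apply_le_mul`) lifts this to the product: the
product outer measure is the largest one dominated by the product formula on boxes, so a bound
that holds on boxes holds on all measurable sets.
-/

open MeasureTheory

/-- Translating the noise translates the density, by invariance of Lebesgue measure. -/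
lemma map_laplaceMeasure_eq (σ a : ℝ) :
    (laplaceMeasure σ).map (fun η => a + η) = volume.withDensity
      (fun t => ENNReal.ofReal ((1 / (2 * σ)) * Real.exp (-|t - a| / σ))) := by
  ext s hs
  have hmeas : Measurable (fun η : ℝ => a + η) := by fun_prop
  rw [Measure.map_apply hmeas hs, laplaceMeasure, withDensity_apply _ (hmeas hs),
    withDensity_apply _ hs, ← lintegral_indicator (hmeas hs), ← lintegral_indicator hs,
    ← lintegral_add_left_eq_self (μ := volume) (s.indicator _) a]
  congr 1
  funext t
  simp only [Set.indicator, add_sub_cancel_left]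
  rfl

/-- The Laplace mechanism: if the centres differ by at most `σ * ε`, the shifted Laplace
distributions are within a factor `exp ε` of each other. -/
lemma map_laplaceMeasure_le_s12 {σ ε a₁ a₂ : ℝ} (hσ : 0 < σ) (h : |a₁ - a₂| ≤ σ * ε) :
    (laplaceMeasure σ).map (fun η => a₁ + η) ≤
      ENNReal.ofReal (Real.exp ε) • (laplaceMeasure σ).map (fun η => a₂ + η) := by
  rw [map_laplaceMeasure_eq, map_laplaceMeasure_eq, ← withDensity_smul _ (by fun_prop)]
  refine withDensity_mono (ae_of_all _ fun t => ?_)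
  simp only [Pi.smul_apply, smul_eq_mul]
  rw [← ENNReal.ofReal_mul (Real.exp_pos ε).le]
  refine ENNReal.ofReal_le_ofReal ?_
  have hexp : Real.exp (-|t - a₁| / σ) ≤ Real.exp ε * Real.exp (-|t - a₂| / σ) := by
    rw [← Real.exp_add, Real.exp_le_exp, div_le_iff₀ hσ, add_mul, div_mul_cancel₀ _ hσ.ne']
    have htri := abs_sub_le t a₁ a₂
    linarith
  calc (1 / (2 * σ)) * Real.exp (-|t - a₁| / σ)
      ≤ (1 / (2 * σ)) * (Real.exp ε * Real.exp (-|t - a₂| / σ)) := by gcongr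
    _ = _ := by ring

/-- Parallel composition: if two families of measures agree except at `i₀`, where the first is
dominated by `c` times the second, then so are their products. No `σ`-finiteness is needed, since
only the upper bound on boxes enters. -/
lemma pi_apply_le_mul {ι : Type*} [Fintype ι] {μ ν : ι → Measure ℝ} {c : ENNReal}
    (hc₀ : c ≠ 0) (hc : c ≠ ⊤) (i₀ : ι) (hne : ∀ i, i ≠ i₀ → μ i = ν i) (hle : μ i₀ ≤ c • ν i₀)
    {S : Set (ι → ℝ)} (hS : MeasurableSet S) :
    Measure.pi μ S ≤ c * Measure.pi ν S := by
  classical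
  have hout : c⁻¹ • OuterMeasure.pi (fun i => (μ i).toOuterMeasure) ≤
      OuterMeasure.pi (fun i => (ν i).toOuterMeasure) := by
    refine OuterMeasure.le_pi.2 fun s hs => ?_
    rw [smul_apply, smul_eq_mul, ENNReal.inv_mul_le_iff hc₀ hc]
    refine (OuterMeasure.pi_pi_le _ s).trans ?_
    rw [← Finset.mul_prod_erase _ _ (Finset.mem_univ i₀),
      ← Finset.mul_prod_erase _ (fun i => (ν i).toOuterMeasure (s i)) (Finset.mem_univ i₀),
      ← mul_assoc]
    refine mul_le_mul' (hle (s i₀)) (Finset.prod_le_prod' fun i hi => ?_)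
    rw [hne i (Finset.ne_of_mem_erase hi)]
  have happ := hout S
  rw [smul_apply, smul_eq_mul, ENNReal.inv_mul_le_iff hc₀ hc] at happ
  rw [Measure.pi, Measure.pi, toMeasure_apply _ _ hS, toMeasure_apply _ _ hS]
  exact happ

/-- The grids are disjoint: a position determines the grid containing it. -/
lemma grid_index_unique {G_R G_C b : ℕ} {rc rc' : Fin G_R × Fin G_C}
    {p : Fin (G_R * b) × Fin (G_C * b)}
    (h : p ∈ grid G_R G_C b rc) (h' : p ∈ grid G_R G_C b rc') : rc = rc' := by
  simp only [grid, Finset.mem_filter, Finset.mem_univ, true_and] at h h'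
  obtain ⟨h1, h2, h3, h4⟩ := h
  obtain ⟨k1, k2, k3, k4⟩ := h'
  refine Prod.ext (Fin.ext ?_) (Fin.ext ?_)
  · rw [← Nat.div_eq_of_lt_le h1 h2, Nat.div_eq_of_lt_le k1 k2]
  · rw [← Nat.div_eq_of_lt_le h3 h4, Nat.div_eq_of_lt_le k3 k4]

/-- Sensitivity of the grid mean: changing at most `m` pixels moves it by at most `255·m/b²`. -/
lemma abs_gridMean_sub_le {G_R G_C b m : ℕ} {I₁ I₂ : Fin (G_R * b) × Fin (G_C * b) → ℝ}
    (hI₁ : ∀ q, I₁ q ∈ Set.Icc (0 : ℝ) 255) (hI₂ : ∀ q, I₂ q ∈ Set.Icc (0 : ℝ) 255)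
    (hdiff : {q | I₁ q ≠ I₂ q}.ncard ≤ m) (rc : Fin G_R × Fin G_C) :
    |gridMean G_R G_C b I₁ rc - gridMean G_R G_C b I₂ rc| ≤ 255 * m / (b : ℝ) ^ 2 := by
  classical
  have hpix : ∀ q, |I₁ q - I₂ q| ≤ if I₁ q ≠ I₂ q then (255 : ℝ) else 0 := by
    intro q
    split_ifs with hq
    · have h1 := hI₁ q
      have h2 := hI₂ q
      exact abs_le.2 ⟨by linarith [h1.1, h2.2], by linarith [h1.2, h2.1]⟩
    · simp [not_not.1 hq]
  have hcard : ((Finset.univ.filter fun q => I₁ q ≠ I₂ q).card : ℝ) ≤ m := by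
    rw [← Set.ncard_coe_finset]
    simpa using hdiff
  have hsum : |∑ p ∈ grid G_R G_C b rc, (I₁ p - I₂ p)| ≤ 255 * m := by
    calc |∑ p ∈ grid G_R G_C b rc, (I₁ p - I₂ p)|
        ≤ ∑ p ∈ grid G_R G_C b rc, |I₁ p - I₂ p| := Finset.abs_sum_le_sum_abs _ _
      _ ≤ ∑ p, |I₁ p - I₂ p| :=
          Finset.sum_le_sum_of_subset_of_nonneg (Finset.subset_univ _) fun _ _ _ => abs_nonneg _
      _ ≤ ∑ p, if I₁ p ≠ I₂ p then (255 : ℝ) else 0 := Finset.sum_le_sum fun p _ => hpix p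
      _ = 255 * ((Finset.univ.filter fun q => I₁ q ≠ I₂ q).card : ℝ) := by
          rw [← Finset.sum_filter, Finset.sum_const, nsmul_eq_mul, mul_comm]
      _ ≤ 255 * m := by gcongr
  rw [gridMean, gridMean, ← mul_sub, ← Finset.sum_sub_distrib, abs_mul,
    abs_of_nonneg (by positivity), one_div_mul_eq_div]
  gcongr

/-- Privacy of the parallel per-grid mechanism via parallel composition: if two
images with values in `[0,255]` differ at at most `m` positions, all lying inside
the single grid `G_{r₀,c₀}`, then the independent per-grid noising distributions
agree in every factor except `(r₀,c₀)`, the means at `(r₀,c₀)` differ by at most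
`255·m/b²`, and the product output distributions satisfy
`μ_{I₁}(S) ≤ exp(ε) · μ_{I₂}(S)` for every measurable `S`. -/
theorem stmt_12 (G_R G_C b m : ℕ) (hb : 0 < b) (hm : 1 ≤ m) (ε : ℝ) (hε : 0 < ε)
    (σ : ℝ) (hσ : σ = 255 * m / ((b : ℝ) ^ 2 * ε))
    (I₁ I₂ : Fin (G_R * b) × Fin (G_C * b) → ℝ)
    (hI₁ : ∀ q, I₁ q ∈ Set.Icc (0 : ℝ) 255) (hI₂ : ∀ q, I₂ q ∈ Set.Icc (0 : ℝ) 255)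
    (rc₀ : Fin G_R × Fin G_C)
    (hdiff : {q | I₁ q ≠ I₂ q}.ncard ≤ m)
    (hloc : ∀ q, I₁ q ≠ I₂ q → q ∈ grid G_R G_C b rc₀) :
    (∀ rc : Fin G_R × Fin G_C, rc ≠ rc₀ →
      (laplaceMeasure σ).map (fun η => gridMean G_R G_C b I₁ rc + η) =
        (laplaceMeasure σ).map (fun η => gridMean G_R G_C b I₂ rc + η)) ∧
    |gridMean G_R G_C b I₁ rc₀ - gridMean G_R G_C b I₂ rc₀| ≤ 255 * m / (b : ℝ) ^ 2 ∧
    (∀ S : Set ((Fin G_R × Fin G_C) → ℝ), MeasurableSet S →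
      (Measure.pi fun rc =>
          (laplaceMeasure σ).map (fun η => gridMean G_R G_C b I₁ rc + η)) S ≤
        ENNReal.ofReal (Real.exp ε) *
          (Measure.pi fun rc =>
            (laplaceMeasure σ).map (fun η => gridMean G_R G_C b I₂ rc + η)) S) := by
  have hb' : (0 : ℝ) < b := by exact_mod_cast hb
  have hm' : (0 : ℝ) < m := by exact_mod_cast hm
  have hσ_pos : 0 < σ := by rw [hσ]; positivity
  have hmean : ∀ rc, rc ≠ rc₀ → gridMean G_R G_C b I₁ rc = gridMean G_R G_C b I₂ rc := by
    intro rc hrc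
    rw [gridMean, gridMean]
    congr 1
    refine Finset.sum_congr rfl fun p hp => ?_
    by_contra hne
    exact hrc (grid_index_unique hp (hloc p hne))
  have hsens := abs_gridMean_sub_le hI₁ hI₂ hdiff rc₀
  have hfactor : ∀ rc, rc ≠ rc₀ →
      (laplaceMeasure σ).map (fun η => gridMean G_R G_C b I₁ rc + η) =
        (laplaceMeasure σ).map (fun η => gridMean G_R G_C b I₂ rc + η) := by
    intro rc hrc
    rw [hmean rc hrc]
  refine ⟨hfactor, hsens, fun S hS => ?_⟩
  have hσε : 255 * m / (b : ℝ) ^ 2 = σ * ε := by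
    rw [hσ]
    field_simp
  exact pi_apply_le_mul (ENNReal.ofReal_pos.2 (Real.exp_pos ε)).ne' ENNReal.ofReal_ne_top rc₀
    hfactor (map_laplaceMeasure_le_s12 hσ_pos (hsens.trans_eq hσε)) hS
end
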